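/- If the metric g is conformal to a pure radiation metric with parallel rays spanned by K (ĝ = e^{2Υ}g aligned pure radiation), then the Weyl tensor of g satisfies C_{abcd}K^cX^d = 0 for all X ⊥ K, and the gradient Υ_a = ∇_aΥ satisfies (A_{abc} + C_{cba}{}^dΥ_d)X^a = 0 for all X ⊥ K. -/

import Mathlib

/- A coordinate-chart framework for pseudo-Riemannian geometry on ℝⁿ:
metric, Christoffel symbols, covariant derivatives, curvature, Ricci,
Schouten, Weyl, Cotton and Bach tensors, and the standard tractor
connection, all written in index notation. -/

noncomputable section

open scoped BigOperators

/-- Points of the chart ℝⁿ. -/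
abbrev Pt (n : ℕ) := Fin n → ℝ

/-- Partial derivative of a scalar function in the coordinate direction `a`. -/
def pd {n : ℕ} (a : Fin n) (f : Pt n → ℝ) (x : Pt n) : ℝ :=
  fderiv ℝ f x (Pi.single a 1)

/-- A smooth vector field. -/
def SmoothVF {n : ℕ} (K : Pt n → Pt n) : Prop := ∀ b, ContDiff ℝ (⊤ : ℕ∞) (fun x => K x b)

/-- A smooth one-form. -/
def SmoothForm {n : ℕ} (f : Pt n → Fin n → ℝ) : Prop := ∀ b, ContDiff ℝ (⊤ : ℕ∞) (fun x => f x b)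

/-- A pseudo-Riemannian metric (of arbitrary signature) in a global
coordinate chart on ℝⁿ, given by its components `g x a b`, together with the
components `ginv` of its pointwise inverse. -/
structure MetricG (n : ℕ) where
  g : Pt n → Fin n → Fin n → ℝ
  ginv : Pt n → Fin n → Fin n → ℝ
  symm : ∀ x a b, g x a b = g x b a
  smooth : ∀ a b, ContDiff ℝ (⊤ : ℕ∞) (fun x => g x a b)
  inv_mul : ∀ x a c, (∑ b, ginv x a b * g x b c) = if a = c then (1:ℝ) else 0

namespace MetricG

variable {n : ℕ} (G : MetricG n)

/-- The inner product of two tangent vectors at `x`. -/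
def ip (x : Pt n) (X Y : Pt n) : ℝ := ∑ a, ∑ b, G.g x a b * X a * Y b

/-- Christoffel symbols Γ^c_{ab} of the Levi-Civita connection. -/
def Γ (c a b : Fin n) (x : Pt n) : ℝ :=
  (1/2) * ∑ d, G.ginv x c d *
    (pd a (fun y => G.g y d b) x + pd b (fun y => G.g y d a) x - pd d (fun y => G.g y a b) x)

/-- Covariant derivative (∇_a X)^b of a vector field. -/
def covVec (X : Pt n → Pt n) (a b : Fin n) (x : Pt n) : ℝ :=
  pd a (fun y => X y b) x + ∑ c, G.Γ b a c x * X x c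

/-- Covariant derivative ∇_a ω_b of a one-form. -/
def cov1 (ω : Pt n → Fin n → ℝ) (a b : Fin n) (x : Pt n) : ℝ :=
  pd a (fun y => ω y b) x - ∑ e, G.Γ e a b x * ω x e

/-- Covariant derivative ∇_a T_{bc} of a (0,2)-tensor field. -/
def cov2 (T : Pt n → Fin n → Fin n → ℝ) (a b c : Fin n) (x : Pt n) : ℝ :=
  pd a (fun y => T y b c) x - ∑ e, G.Γ e a b x * T x e c - ∑ e, G.Γ e a c x * T x b e

/-- Covariant derivative ∇_a T_{bcd} of a (0,3)-tensor field. -/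
def cov3 (T : Pt n → Fin n → Fin n → Fin n → ℝ) (a b c d : Fin n) (x : Pt n) : ℝ :=
  pd a (fun y => T y b c d) x - ∑ e, G.Γ e a b x * T x e c d
    - ∑ e, G.Γ e a c x * T x b e d - ∑ e, G.Γ e a d x * T x b c e

/-- Curvature tensor R_{ab}{}^c{}_d, with the convention
`(∇_a∇_b − ∇_b∇_a)X^c = R_{ab}{}^c{}_d X^d`. -/
def Riem (a b c d : Fin n) (x : Pt n) : ℝ :=
  pd a (fun y => G.Γ c b d y) x - pd b (fun y => G.Γ c a d y) x
    + ∑ e, (G.Γ c a e x * G.Γ e b d x - G.Γ c b e x * G.Γ e a d x)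

/-- (4,0)-curvature tensor R_{abcd} = g_{ce} R_{ab}{}^e{}_d. -/
def Riem4 (a b c d : Fin n) (x : Pt n) : ℝ :=
  ∑ e, G.g x c e * G.Riem a b e d x

/-- Ricci tensor R_{bd} = R_{cb}{}^c{}_d. -/
def Ricci (b d : Fin n) (x : Pt n) : ℝ := ∑ c, G.Riem c b c d x

/-- Scalar curvature R = g^{ab} R_{ab}. -/
def Scal (x : Pt n) : ℝ := ∑ a, ∑ b, G.ginv x a b * G.Ricci a b x

/-- Schouten tensor P_{ab} = (1/(n−2)) (R_{ab} − R/(2(n−1)) g_{ab}). -/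
def Schouten (a b : Fin n) (x : Pt n) : ℝ :=
  (1 / ((n : ℝ) - 2)) * (G.Ricci a b x - G.Scal x / (2 * ((n : ℝ) - 1)) * G.g x a b)

/-- Weyl tensor C_{abcd} = R_{abcd} − 2(g_{c[a}P_{b]d} + g_{d[b}P_{a]c}). -/
def Weyl (a b c d : Fin n) (x : Pt n) : ℝ :=
  G.Riem4 a b c d x -
    (G.g x c a * G.Schouten b d x - G.g x c b * G.Schouten a d x
      + G.g x d b * G.Schouten a c x - G.g x d a * G.Schouten b c x)

/-- Cotton tensor A_{abc} = ∇_b P_{ca} − ∇_c P_{ba} (= 2∇_{[b}P_{c]a}). -/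
def Cotton (a b c : Fin n) (x : Pt n) : ℝ :=
  G.cov2 (fun y i j => G.Schouten i j y) b c a x - G.cov2 (fun y i j => G.Schouten i j y) c b a x

/-- Bach tensor B_{ab} = ∇^c A_{acb} + P^{dc} C_{dacb}. -/
def Bach (a b : Fin n) (x : Pt n) : ℝ :=
  (∑ c, ∑ e, G.ginv x c e * G.cov3 (fun y i j k => G.Cotton i j k y) e a c b x)
    + ∑ d, ∑ c, (∑ i, ∑ j, G.ginv x d i * G.ginv x c j * G.Schouten i j x) * G.Weyl d a c b x

/-- `K` is a null vector field. -/
def IsNull (K : Pt n → Pt n) : Prop := ∀ x, G.ip x (K x) (K x) = 0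

/-- Pure radiation condition: Ric(X,·) = 0 for every vector X orthogonal to K. -/
def PureRadiation (K : Pt n → Pt n) : Prop :=
  ∀ x (X : Pt n), G.ip x (K x) X = 0 → ∀ b, (∑ a, G.Ricci a b x * X a) = 0

/-- Parallel rays condition: ∇_a K^b = f_a K^b. -/
def ParallelRays (K : Pt n → Pt n) (f : Pt n → Fin n → ℝ) : Prop :=
  ∀ x a b, G.covVec K a b x = f x a * K x b

/-- first (ℝ-) component of the tractor derivative of the tractor (ρ, X, σ):
∇_a ρ − P_{ab} X^b. -/
def trD0 (ρ : Pt n → ℝ) (X : Pt n → Pt n) (a : Fin n) (x : Pt n) : ℝ :=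
  pd a ρ x - ∑ b, G.Schouten a b x * X x b

/-- middle (TM-) component of the tractor derivative of the tractor (ρ, X, σ):
∇_a X^b + ρ δ_a{}^b + σ P_a{}^b. -/
def trD1 (ρ : Pt n → ℝ) (X : Pt n → Pt n) (σ : Pt n → ℝ) (a b : Fin n) (x : Pt n) : ℝ :=
  G.covVec X a b x + ρ x * (if a = b then (1:ℝ) else 0)
    + σ x * ∑ e, G.ginv x b e * G.Schouten a e x

/-- last (ℝ-) component of the tractor derivative of the tractor (ρ, X, σ):
∇_a σ − g_{ab} X^b. -/
def trD2 (X : Pt n → Pt n) (σ : Pt n → ℝ) (a : Fin n) (x : Pt n) : ℝ :=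
  pd a σ x - ∑ b, G.g x a b * X x b

end MetricG

/-!
Write `S` for the difference of the Schouten tensors of `ĝ` and `g`. The curvature of `ĝ` is
`e^{2Υ}` times that of `g` plus the Kulkarni–Nomizu product of `g` and `S`, so the Weyl tensors
agree up to `e^{2Υ}`, and by the Ricci identity for `dΥ` the curl of the Schouten tensor changes by
`C_{cba}{}^dΥ_d`. Both claims thus reduce to `C(K, X) = 0` and `A(X) = 0` for `ĝ` itself.

There the Ricci tensor is a multiple of `K♭ ⊗ K♭` with `K` null, so the scalar curvature vanishes
and the Schouten tensor annihilates `K^⊥`. Since `∇K = f ⊗ K`, the curvature maps `K` to the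
multiple `df ⊗ K` of `K`, which gives the Weyl part. For the Cotton part, the multiples of `K♭` are
stable under `∇`, so `∇P` annihilates `K^⊥` as `P` does.
-/

open scoped ContDiff Matrix

/-- Lets `fun_prop` differentiate the smooth fields below. -/
@[fun_prop]
lemma differentiableAt_of_contDiff_infty {E F : Type*} [NormedAddCommGroup E] [NormedSpace ℝ E]
    [NormedAddCommGroup F] [NormedSpace ℝ F] {φ : E → F} {x : E} (hφ : ContDiff ℝ ∞ φ) :
    DifferentiableAt ℝ φ x :=
  hφ.differentiable (by simp) x

section PartialDerivatives

variable {n : ℕ} (a b : Fin n) {φ ψ : Pt n → ℝ} {x : Pt n}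

lemma pd_add (hφ : DifferentiableAt ℝ φ x) (hψ : DifferentiableAt ℝ ψ x) :
    pd a (fun y => φ y + ψ y) x = pd a φ x + pd a ψ x := by
  simp only [pd, fderiv_fun_add hφ hψ, add_apply]

lemma pd_sub (hφ : DifferentiableAt ℝ φ x) (hψ : DifferentiableAt ℝ ψ x) :
    pd a (fun y => φ y - ψ y) x = pd a φ x - pd a ψ x := by
  simp only [pd, fderiv_fun_sub hφ hψ, sub_apply]

lemma pd_mul (hφ : DifferentiableAt ℝ φ x) (hψ : DifferentiableAt ℝ ψ x) :
    pd a (fun y => φ y * ψ y) x = pd a φ x * ψ x + φ x * pd a ψ x := by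
  simp only [pd, fderiv_fun_mul hφ hψ, add_apply, smul_apply, smul_eq_mul]
  ring

lemma pd_const_mul (r : ℝ) (hφ : DifferentiableAt ℝ φ x) :
    pd a (fun y => r * φ y) x = r * pd a φ x := by
  simp only [pd, fderiv_const_mul hφ, smul_apply, smul_eq_mul]

lemma pd_sum {ι : Type*} {s : Finset ι} {φ : ι → Pt n → ℝ}
    (hφ : ∀ i ∈ s, DifferentiableAt ℝ (φ i) x) :
    pd a (fun y => ∑ i ∈ s, φ i y) x = ∑ i ∈ s, pd a (φ i) x := by
  simp only [pd, fderiv_fun_sum hφ, sum_apply]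

lemma pd_exp (hφ : DifferentiableAt ℝ φ x) :
    pd a (fun y => Real.exp (φ y)) x = Real.exp (φ x) * pd a φ x := by
  simp only [pd, fderiv_exp hφ, smul_apply, smul_eq_mul]

@[fun_prop]
lemma contDiff_pd (hφ : ContDiff ℝ ∞ φ) : ContDiff ℝ ∞ (fun x => pd a φ x) :=
  (hφ.fderiv_right le_rfl).clm_apply contDiff_const

lemma pd_comm (hφ : ContDiff ℝ 2 φ) :
    pd a (fun y => pd b φ y) x = pd b (fun y => pd a φ y) x := by
  have hsymm : IsSymmSndFDerivAt ℝ φ x := hφ.contDiffAt.isSymmSndFDerivAt (by simp)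
  have hdiff : DifferentiableAt ℝ (fderiv ℝ φ) x :=
    (hφ.fderiv_right (m := 1) (by norm_num)).differentiable one_ne_zero x
  have hsnd (a b : Fin n) : pd a (fun y => pd b φ y) x =
      fderiv ℝ (fderiv ℝ φ) x (Pi.single a 1) (Pi.single b 1) := by
    simp [pd, fderiv_clm_apply hdiff (differentiableAt_const _)]
  rw [hsnd, hsnd, hsymm.eq]

/-- The differential `dφ` of a function, as a covector field: the paper's `Υ_a = ∇_aΥ`. -/
def differential (φ : Pt n → ℝ) (x : Pt n) : Fin n → ℝ := fun a => pd a φ x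

@[fun_prop]
lemma contDiff_differential (hφ : ContDiff ℝ ∞ φ) : ContDiff ℝ ∞ (differential φ) :=
  contDiff_pi.2 fun _ => contDiff_pd _ hφ

end PartialDerivatives

lemma contDiff_det {E m : Type*} [NormedAddCommGroup E] [NormedSpace ℝ E] [Fintype m]
    [DecidableEq m] {k : WithTop ℕ∞} {M : E → Matrix m m ℝ}
    (hM : ∀ i j, ContDiff ℝ k (fun x => M x i j)) : ContDiff ℝ k (fun x => (M x).det) := by
  simp only [Matrix.det_apply]
  exact ContDiff.sum fun σ _ => (contDiff_prod fun i _ => hM _ _).const_smul _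

lemma mul_eq_mul_of_dotProduct_eq_zero {m R : Type*} [Fintype m] [CommRing R]
    {u w : m → R} (h : ∀ X, w ⬝ᵥ X = 0 → u ⬝ᵥ X = 0) (i j : m) :
    w i * u j = w j * u i := by
  classical
  have hX := h (w i • Pi.single j 1 - w j • Pi.single i 1) (by
    simp [dotProduct_sub, mul_comm])
  simpa [dotProduct_sub, sub_eq_zero] using hX

namespace MetricG

variable {n : ℕ} (G : MetricG n)

section MusicalIsomorphisms

variable (x : Pt n)

/-- The lowering `v_a = g_{ab} v^b` of a tangent vector to a covector. -/
def flat (v : Fin n → ℝ) : Fin n → ℝ := Matrix.of (G.g x) *ᵥ v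

/-- The raising `u^a = g^{ab} u_b` of a covector to a tangent vector. -/
def sharp (u : Fin n → ℝ) : Fin n → ℝ := Matrix.of (G.ginv x) *ᵥ u

/-- The inner product `g^{ab} u_a v_b` of two covectors. -/
def cometric : LinearMap.BilinForm ℝ (Fin n → ℝ) := Matrix.toBilin' (Matrix.of (G.ginv x))

/-- The metric trace `g^{ab} T_{ab}`. -/
def trace (T : Fin n → Fin n → ℝ) : ℝ := ∑ a, ∑ b, G.ginv x a b * T a b

lemma ginv_mul_g : Matrix.of (G.ginv x) * Matrix.of (G.g x) = 1 := by
  ext a c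
  simp [Matrix.mul_apply, G.inv_mul, Matrix.one_apply]

lemma ginv_eq_inv : Matrix.of (G.ginv x) = (Matrix.of (G.g x))⁻¹ :=
  (Matrix.inv_eq_left_inv (G.ginv_mul_g x)).symm

lemma isSymm_g : (Matrix.of (G.g x)).IsSymm := Matrix.IsSymm.ext fun _ _ => G.symm _ _ _

lemma isSymm_ginv : (Matrix.of (G.ginv x)).IsSymm := by
  rw [ginv_eq_inv, Matrix.IsSymm, Matrix.transpose_nonsing_inv, G.isSymm_g x]

@[simp]
lemma sharp_flat (v : Fin n → ℝ) : G.sharp x (G.flat x v) = v := by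
  rw [sharp, flat, Matrix.mulVec_mulVec, ginv_mul_g, Matrix.one_mulVec]

@[simp]
lemma flat_sharp (u : Fin n → ℝ) : G.flat x (G.sharp x u) = u := by
  rw [sharp, flat, Matrix.mulVec_mulVec, mul_eq_one_comm.1 (G.ginv_mul_g x), Matrix.one_mulVec]

lemma flat_smul (r : ℝ) (v : Fin n → ℝ) : G.flat x (r • v) = r • G.flat x v :=
  Matrix.mulVec_smul _ _ _

lemma flat_sub (v w : Fin n → ℝ) : G.flat x (v - w) = G.flat x v - G.flat x w :=
  Matrix.mulVec_sub _ _ _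

lemma flat_single (a : Fin n) : G.flat x (Pi.single a 1) = G.g x a := by
  ext b
  simp [flat, G.symm x a]

lemma flat_ne_zero {v : Fin n → ℝ} (hv : v ≠ 0) : G.flat x v ≠ 0 := fun h =>
  hv (by rw [← G.sharp_flat x v, h, sharp, Matrix.mulVec_zero])

lemma flat_dotProduct_comm (v w : Fin n → ℝ) : G.flat x v ⬝ᵥ w = G.flat x w ⬝ᵥ v := by
  rw [flat, flat, dotProduct_comm, Matrix.dotProduct_mulVec, ← Matrix.mulVec_transpose, G.isSymm_g]

lemma ip_eq_flat_dotProduct (X Y : Pt n) : G.ip x X Y = G.flat x X ⬝ᵥ Y := by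
  rw [flat_dotProduct_comm, dotProduct_comm]
  simp only [ip, flat, dotProduct, Matrix.mulVec, Matrix.of_apply, Finset.mul_sum]
  exact Finset.sum_congr rfl fun a _ => Finset.sum_congr rfl fun b _ => by ring

lemma cometric_eq_dotProduct_sharp (u v : Fin n → ℝ) : G.cometric x u v = u ⬝ᵥ G.sharp x v :=
  Matrix.toBilin'_apply' _ _ _

lemma cometric_comm (u v : Fin n → ℝ) : G.cometric x u v = G.cometric x v u := by
  rw [cometric_eq_dotProduct_sharp, cometric_eq_dotProduct_sharp, sharp, sharp, dotProduct_comm,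
    Matrix.dotProduct_mulVec, ← Matrix.mulVec_transpose, G.isSymm_ginv, dotProduct_comm]

lemma cometric_flat_left (v u : Fin n → ℝ) : G.cometric x (G.flat x v) u = v ⬝ᵥ u := by
  rw [cometric_comm, cometric_eq_dotProduct_sharp, sharp_flat, dotProduct_comm]

@[simp]
lemma cometric_g_left (a : Fin n) (u : Fin n → ℝ) : G.cometric x (G.g x a) u = u a := by
  rw [← flat_single, cometric_flat_left, single_one_dotProduct]

@[simp]
lemma cometric_g_right (u : Fin n → ℝ) (a : Fin n) : G.cometric x u (G.g x a) = u a := by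
  rw [cometric_comm, cometric_g_left]

lemma trace_add (T S : Fin n → Fin n → ℝ) :
    G.trace x (fun a b => T a b + S a b) = G.trace x T + G.trace x S := by
  simp only [trace, mul_add, Finset.sum_add_distrib]

lemma trace_sub (T S : Fin n → Fin n → ℝ) :
    G.trace x (fun a b => T a b - S a b) = G.trace x T - G.trace x S := by
  simp only [trace, mul_sub, Finset.sum_sub_distrib]

lemma trace_const_mul (r : ℝ) (T : Fin n → Fin n → ℝ) :
    G.trace x (fun a b => r * T a b) = r * G.trace x T := by
  simp only [trace, Finset.mul_sum, mul_left_comm]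

lemma trace_mul (u v : Fin n → ℝ) : G.trace x (fun a b => u a * v b) = G.cometric x u v := by
  simp only [trace, cometric, Matrix.toBilin'_apply, Matrix.of_apply]
  exact Finset.sum_congr rfl fun a _ => Finset.sum_congr rfl fun b _ => by ring

lemma trace_swap (T : Fin n → Fin n → ℝ) : G.trace x (fun a b => T b a) = G.trace x T := by
  rw [trace, Finset.sum_comm]
  exact Finset.sum_congr rfl fun b _ => Finset.sum_congr rfl fun a _ =>
    congrArg (· * T b a) ((G.isSymm_ginv x).apply b a)

lemma trace_g : G.trace x (G.g x) = n := by
  have hdiag (a : Fin n) : ∑ b, G.ginv x a b * G.g x a b = 1 := by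
    simpa only [G.symm x a, if_pos] using G.inv_mul x a a
  simp [trace, hdiag]

end MusicalIsomorphisms

section Smoothness

@[fun_prop]
lemma contDiff_g (a : Fin n) : ContDiff ℝ ∞ (fun x => G.g x a) :=
  contDiff_pi.2 fun b => G.smooth a b

@[fun_prop]
lemma contDiff_ginv (a b : Fin n) : ContDiff ℝ ∞ (fun x => G.ginv x a b) := by
  have hcramer (x : Pt n) : G.ginv x a b =
      ((Matrix.of (G.g x)).det)⁻¹ * ((Matrix.of (G.g x)).updateRow b (Pi.single a 1)).det := by
    rw [← Matrix.of_apply (f := G.ginv x), ginv_eq_inv, Matrix.inv_def, Ring.inverse_eq_inv',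
      Matrix.smul_apply, Matrix.adjugate_apply, smul_eq_mul]
  have hdet_ne (x : Pt n) : (Matrix.of (G.g x)).det ≠ 0 :=
    (Matrix.isUnit_det_of_left_inverse (G.ginv_mul_g x)).ne_zero
  simp only [hcramer]
  refine ((contDiff_det G.smooth).inv hdet_ne).mul (contDiff_det fun i j => ?_)
  rcases eq_or_ne i b with rfl | hi
  · simpa only [Matrix.updateRow_self] using contDiff_const
  · simpa only [Matrix.updateRow_ne hi, Matrix.of_apply] using G.smooth i j

lemma contDiff_flat {V : Pt n → Pt n} (hV : ContDiff ℝ ∞ V) :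
    ContDiff ℝ ∞ (fun x => G.flat x (V x)) := by
  refine contDiff_pi.2 fun b => ?_
  simp only [flat, Matrix.mulVec, dotProduct, Matrix.of_apply]
  fun_prop

lemma contDiff_sharp {α : Pt n → Fin n → ℝ} (hα : ContDiff ℝ ∞ α) :
    ContDiff ℝ ∞ (fun x => G.sharp x (α x)) := by
  refine contDiff_pi.2 fun b => ?_
  simp only [sharp, Matrix.mulVec, dotProduct, Matrix.of_apply]
  fun_prop

@[fun_prop]
lemma contDiff_cometric {α β : Pt n → Fin n → ℝ} (hα : ContDiff ℝ ∞ α) (hβ : ContDiff ℝ ∞ β) :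
    ContDiff ℝ ∞ (fun x => G.cometric x (α x) (β x)) := by
  simp only [cometric, Matrix.toBilin'_apply, Matrix.of_apply]
  fun_prop

end Smoothness

section Connection

variable (x : Pt n)

/-- The Christoffel symbols of the first kind `Γ_{cab} = g_{ce} Γ^e_{ab}`, as the covector with
index `c`. -/
def christoffelFirst (a b : Fin n) : Fin n → ℝ := fun c =>
  (1 / 2) * (pd a (fun y => G.g y c b) x + pd b (fun y => G.g y c a) x
    - pd c (fun y => G.g y a b) x)

lemma pd_g (a b c : Fin n) : pd a (fun y => G.g y b c) x =
    G.christoffelFirst x a b c + G.christoffelFirst x a c b := by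
  simp only [christoffelFirst, G.symm _ a, G.symm _ c b]
  ring

lemma christoffelFirst_comm (a b : Fin n) :
    G.christoffelFirst x a b = G.christoffelFirst x b a := by
  ext c
  simp only [christoffelFirst, G.symm _ a b]
  ring

lemma sharp_christoffelFirst (a b : Fin n) :
    G.sharp x (G.christoffelFirst x a b) = fun c => G.Γ c a b x := by
  ext c
  simp only [sharp, christoffelFirst, Γ, Matrix.mulVec, dotProduct, Matrix.of_apply,
    Finset.mul_sum, mul_left_comm]

lemma flat_Γ (a b : Fin n) : G.flat x (fun c => G.Γ c a b x) = G.christoffelFirst x a b := by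
  rw [← sharp_christoffelFirst, flat_sharp]

@[fun_prop]
lemma contDiff_christoffelFirst (a b : Fin n) :
    ContDiff ℝ ∞ (fun x => G.christoffelFirst x a b) := by
  refine contDiff_pi.2 fun c => ?_
  unfold christoffelFirst
  fun_prop

@[fun_prop]
lemma contDiff_Γ (c a b : Fin n) : ContDiff ℝ ∞ (fun x => G.Γ c a b x) := by
  simp only [Γ]
  fun_prop

variable {x} {α β V : Pt n → Fin n → ℝ} {φ : Pt n → ℝ}

lemma cov1_eq_pd_sub_cometric (α : Pt n → Fin n → ℝ) (a b : Fin n) : G.cov1 α a b x =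
    pd a (fun y => α y b) x - G.cometric x (G.christoffelFirst x a b) (α x) := by
  rw [← flat_Γ, cometric_flat_left]
  rfl

lemma cov1_add (hα : DifferentiableAt ℝ α x) (hβ : DifferentiableAt ℝ β x) (a b : Fin n) :
    G.cov1 (fun y => α y + β y) a b x = G.cov1 α a b x + G.cov1 β a b x := by
  simp only [cov1_eq_pd_sub_cometric, Pi.add_apply, map_add]
  rw [pd_add a (by fun_prop) (by fun_prop)]
  ring

lemma cov1_sub (hα : DifferentiableAt ℝ α x) (hβ : DifferentiableAt ℝ β x) (a b : Fin n) :
    G.cov1 (fun y => α y - β y) a b x = G.cov1 α a b x - G.cov1 β a b x := by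
  simp only [cov1_eq_pd_sub_cometric, Pi.sub_apply, map_sub]
  rw [pd_sub a (by fun_prop) (by fun_prop)]
  ring

lemma cov1_smul (hφ : DifferentiableAt ℝ φ x) (hα : DifferentiableAt ℝ α x) (a b : Fin n) :
    G.cov1 (fun y => φ y • α y) a b x = pd a φ x * α x b + φ x * G.cov1 α a b x := by
  simp only [cov1_eq_pd_sub_cometric, Pi.smul_apply, map_smul, smul_eq_mul]
  rw [pd_mul a hφ (by fun_prop)]
  ring

lemma cov1_g (a b c : Fin n) :
    G.cov1 (fun y => G.g y c) a b x = G.christoffelFirst x a c b := by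
  rw [cov1_eq_pd_sub_cometric, cometric_g_right, pd_g]
  ring

lemma cov1_differential_comm (hφ : ContDiff ℝ ∞ φ) (a b : Fin n) :
    G.cov1 (differential φ) b a x = G.cov1 (differential φ) a b x := by
  simp only [cov1_eq_pd_sub_cometric, differential, G.christoffelFirst_comm x b]
  rw [pd_comm b a (mod_cast contDiff_infty.1 hφ 2)]

@[fun_prop]
lemma contDiff_cov1 (hα : ContDiff ℝ ∞ α) (a b : Fin n) :
    ContDiff ℝ ∞ (fun x => G.cov1 α a b x) := by
  unfold cov1
  fun_prop

@[fun_prop]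
lemma contDiff_covVec (hV : ContDiff ℝ ∞ V) (a b : Fin n) :
    ContDiff ℝ ∞ (fun x => G.covVec V a b x) := by
  unfold covVec
  fun_prop

lemma pd_dotProduct (hV : DifferentiableAt ℝ V x) (hα : DifferentiableAt ℝ α x) (a : Fin n) :
    pd a (fun y => V y ⬝ᵥ α y) x =
      (fun b => G.covVec V a b x) ⬝ᵥ α x + V x ⬝ᵥ (fun b => G.cov1 α a b x) := by
  have hleibniz : pd a (fun y => V y ⬝ᵥ α y) x =
      ∑ b, pd a (fun y => V y b) x * α x b + ∑ b, V x b * pd a (fun y => α y b) x := by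
    simp only [dotProduct]
    rw [pd_sum a fun b _ => by fun_prop, ← Finset.sum_add_distrib]
    exact Finset.sum_congr rfl fun b _ => pd_mul a (by fun_prop) (by fun_prop)
  have hΓ : ∑ b, (∑ c, G.Γ b a c x * V x c) * α x b = ∑ b, V x b * ∑ c, G.Γ c a b x * α x c := by
    simp only [Finset.sum_mul, Finset.mul_sum]
    rw [Finset.sum_comm]
    exact Finset.sum_congr rfl fun b _ => Finset.sum_congr rfl fun c _ => by ring
  rw [hleibniz]
  simp only [dotProduct, covVec, cov1, add_mul, mul_sub, Finset.sum_add_distrib,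
    Finset.sum_sub_distrib, hΓ]
  ring

lemma cov1_flat (hV : DifferentiableAt ℝ V x) (a b : Fin n) :
    G.cov1 (fun y => G.flat y (V y)) a b x = G.flat x (fun c => G.covVec V a c x) b := by
  have hflat (y : Pt n) (v : Fin n → ℝ) : G.flat y v b = v ⬝ᵥ G.g y b := by
    rw [← flat_single, dotProduct_comm, flat_dotProduct_comm, dotProduct_single_one]
  rw [cov1_eq_pd_sub_cometric, cometric_comm, cometric_flat_left]
  simp only [hflat]
  rw [G.pd_dotProduct hV (by fun_prop)]
  simp only [cov1_g, add_sub_cancel_right]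

lemma pd_cometric (hα : ContDiff ℝ ∞ α) (hβ : DifferentiableAt ℝ β x) (a : Fin n) :
    pd a (fun y => G.cometric y (α y) (β y)) x =
      G.cometric x (fun b => G.cov1 α a b x) (β x)
        + G.cometric x (α x) (fun b => G.cov1 β a b x) := by
  have hV : DifferentiableAt ℝ (fun y => G.sharp y (α y)) x :=
    (G.contDiff_sharp hα).differentiable (by simp) x
  have hcov : (fun b => G.cov1 α a b x) =
      G.flat x (fun b => G.covVec (fun y => G.sharp y (α y)) a b x) := by
    ext b
    simpa only [flat_sharp] using G.cov1_flat hV a b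
  have hpair (y : Pt n) (u v : Fin n → ℝ) : G.cometric y u v = G.sharp y u ⬝ᵥ v := by
    rw [← cometric_flat_left, flat_sharp]
  rw [hcov, cometric_flat_left]
  simp only [hpair]
  exact G.pd_dotProduct hV hβ a

end Connection

section Curvature

variable {x : Pt n} {α V : Pt n → Fin n → ℝ}

lemma riem_eq_covVec_Γ (a b c d : Fin n) : G.Riem a b c d x =
    G.covVec (fun y c => G.Γ c b d y) a c x - G.covVec (fun y c => G.Γ c a d y) b c x := by
  simp only [Riem, covVec, Finset.sum_sub_distrib]
  ring

lemma riem4_eq_flat (a b c d : Fin n) :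
    G.Riem4 a b c d x = G.flat x (fun e => G.Riem a b e d x) c := rfl

/-- Lowering an index commutes with `∇`, so the fully covariant curvature is built from the
Christoffel symbols of the first kind as `R_{ab}{}^c{}_d` is from those of the second. -/
lemma riem4_eq_cov1_christoffelFirst (a b c d : Fin n) : G.Riem4 a b c d x =
    G.cov1 (fun y => G.christoffelFirst y b d) a c x
      - G.cov1 (fun y => G.christoffelFirst y a d) b c x := by
  have hflat (a b d : Fin n) : G.cov1 (fun y => G.christoffelFirst y b d) a c x =
      G.flat x (fun c => G.covVec (fun y c => G.Γ c b d y) a c x) c := by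
    simp only [← flat_Γ]
    exact G.cov1_flat (by fun_prop) a c
  rw [hflat, hflat, ← Pi.sub_apply, ← flat_sub, riem4_eq_flat]
  simp only [riem_eq_covVec_Γ]
  rfl

lemma riem4_swap_left (a b c d : Fin n) : G.Riem4 b a c d x = -G.Riem4 a b c d x := by
  simp only [riem4_eq_cov1_christoffelFirst, neg_sub]

lemma riem4_swap_right (a b c d : Fin n) : G.Riem4 a b d c x = -G.Riem4 a b c d x := by
  have hpd (a b : Fin n) : pd a (fun y => pd b (fun z => G.g z c d) y) x =
      pd a (fun y => G.christoffelFirst y b c d) x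
        + pd a (fun y => G.christoffelFirst y b d c) x := by
    simp only [pd_g]
    exact pd_add a (by fun_prop) (by fun_prop)
  have hcomm := pd_comm a b (x := x) (mod_cast contDiff_infty.1 (G.smooth c d) 2)
  rw [hpd, hpd] at hcomm
  simp only [riem4_eq_cov1_christoffelFirst, cov1_eq_pd_sub_cometric]
  rw [G.cometric_comm x (G.christoffelFirst x a d), G.cometric_comm x (G.christoffelFirst x b d)]
  linear_combination hcomm

lemma riem4_bianchi (a b c d : Fin n) :
    G.Riem4 a b c d x + G.Riem4 b d c a x + G.Riem4 d a c b x = 0 := by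
  simp only [riem4_eq_cov1_christoffelFirst, G.christoffelFirst_comm _ d,
    G.christoffelFirst_comm _ b a]
  ring

lemma riem4_pair_comm (a b c d : Fin n) : G.Riem4 c d a b x = G.Riem4 a b c d x := by
  have hdbac := (G.riem4_swap_right d b c a (x := x)).trans
    (neg_eq_iff_eq_neg.2 (G.riem4_swap_left b d c a))
  have hacbd := (G.riem4_swap_right a c d b (x := x)).trans
    (neg_eq_iff_eq_neg.2 (G.riem4_swap_left c a d b))
  linarith [G.riem4_bianchi a b c d (x := x), G.riem4_bianchi a b d c (x := x),
    G.riem4_bianchi c d a b (x := x), G.riem4_bianchi c d b a (x := x),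
    G.riem4_swap_right a b c d (x := x), G.riem4_swap_right b c d a (x := x),
    G.riem4_swap_right d a c b (x := x), G.riem4_swap_right c d a b (x := x)]

lemma covVec_covVec_sub_comm (hV : ContDiff ℝ ∞ V) (a b c : Fin n) :
    G.covVec (fun y c => G.covVec V b c y) a c x - G.covVec (fun y c => G.covVec V a c y) b c x =
      ∑ d, G.Riem a b c d x * V x d := by
  have hpd (a b : Fin n) : pd a (fun y => G.covVec V b c y) x =
      pd a (fun y => pd b (fun z => V z c) y) x
        + ∑ d, (pd a (fun y => G.Γ c b d y) x * V x d
          + G.Γ c b d x * pd a (fun y => V y d) x) := by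
    simp only [covVec]
    rw [pd_add a (by fun_prop) (by fun_prop), pd_sum a fun d _ => by fun_prop]
    exact congrArg _ (Finset.sum_congr rfl fun d _ => pd_mul a (by fun_prop) (by fun_prop))
  have hΓ (a b : Fin n) : ∑ e, G.Γ c a e x * G.covVec V b e x =
      ∑ e, G.Γ c a e x * pd b (fun y => V y e) x
        + ∑ d, (∑ e, G.Γ c a e x * G.Γ e b d x) * V x d := by
    simp only [covVec, mul_add, Finset.sum_add_distrib, Finset.mul_sum, Finset.sum_mul]
    rw [Finset.sum_comm (f := fun d e => G.Γ c a e x * G.Γ e b d x * V x d)]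
    simp only [mul_assoc]
  have hcomm : pd a (fun y => pd b (fun z => V z c) y) x =
      pd b (fun y => pd a (fun z => V z c) y) x :=
    pd_comm a b (mod_cast contDiff_infty.1 (contDiff_pi.1 hV c) 2)
  rw [covVec, covVec, hpd, hpd, hΓ, hΓ, hcomm]
  simp only [Riem, add_mul, sub_mul, Finset.sum_add_distrib, Finset.sum_sub_distrib]
  ring

/-- The covariant exterior derivative `∇_b T_{ca} − ∇_c T_{ba}` of a (0,2)-tensor field, with the
index convention of the Cotton tensor, which is the curl of the Schouten tensor. -/
def curl (T : Pt n → Fin n → Fin n → ℝ) (a b c : Fin n) (x : Pt n) : ℝ :=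
  G.cov2 T b c a x - G.cov2 T c b a x

lemma curl_eq_cov1 (T : Pt n → Fin n → Fin n → ℝ) (a b c : Fin n) :
    G.curl T a b c x = G.cov1 (fun y => T y c) b a x - G.cov1 (fun y => T y b) c a x := by
  have hΓ (e : Fin n) : G.Γ e c b x = G.Γ e b c x := by
    simp only [Γ, add_comm, G.symm _ c b]
  simp only [curl, cov2, cov1, hΓ]
  ring

lemma curl_covVec (hV : ContDiff ℝ ∞ V) (a b c : Fin n) :
    G.curl (fun y i => G.flat y (fun j => G.covVec V i j y)) a b c x =
      ∑ d, G.Riem4 b c a d x * V x d := by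
  rw [curl_eq_cov1, cov1_flat _ (by fun_prop), cov1_flat _ (by fun_prop), ← Pi.sub_apply,
    ← flat_sub]
  simp only [flat, Matrix.mulVec, dotProduct, Matrix.of_apply, Pi.sub_apply,
    G.covVec_covVec_sub_comm hV, Riem4, Finset.mul_sum, Finset.sum_mul, mul_assoc]
  exact Finset.sum_comm

lemma curl_cov1 (hα : ContDiff ℝ ∞ α) (a b c : Fin n) :
    G.curl (fun y i j => G.cov1 α i j y) a b c x =
      -G.cometric x (fun e => G.Riem4 b c e a x) (α x) := by
  have hV := G.contDiff_sharp hα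
  have hcov : (fun y i j => G.cov1 α i j y) =
      fun y i => G.flat y (fun j => G.covVec (fun z => G.sharp z (α z)) i j y) := by
    ext y i j
    simpa only [flat_sharp] using G.cov1_flat (differentiableAt_of_contDiff_infty hV) i j
  rw [hcov, curl_covVec _ hV, cometric_eq_dotProduct_sharp, dotProduct, ← Finset.sum_neg_distrib]
  exact Finset.sum_congr rfl fun d _ => by rw [riem4_swap_right, neg_mul]

end Curvature

section CurvatureTraces

variable (x : Pt n)

lemma ricci_eq_trace_riem4 (b d : Fin n) :
    G.Ricci b d x = G.trace x (fun c e => G.Riem4 c b e d x) :=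
  Finset.sum_congr rfl fun c _ =>
    (congrFun (G.sharp_flat x (fun e => G.Riem c b e d x)) c).symm

lemma ricci_comm (b d : Fin n) : G.Ricci d b x = G.Ricci b d x := by
  rw [ricci_eq_trace_riem4, ricci_eq_trace_riem4, ← trace_swap]
  simp only [G.riem4_pair_comm _ _ _ d]

lemma scal_eq_trace_ricci : G.Scal x = G.trace x (fun a b => G.Ricci a b x) := rfl

lemma schouten_comm (a b : Fin n) : G.Schouten b a x = G.Schouten a b x := by
  simp only [Schouten, G.ricci_comm x a b, G.symm x a b]

@[fun_prop]
lemma contDiff_schouten (a b : Fin n) : ContDiff ℝ ∞ (fun x => G.Schouten a b x) := by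
  have hRicci (a b : Fin n) : ContDiff ℝ ∞ (fun x => G.Ricci a b x) := by
    simp only [Ricci, Riem]
    fun_prop
  simp only [Schouten, Scal]
  fun_prop

/-- The Kulkarni–Nomizu product of the metric with a (0,2)-tensor `T`, normalised so that
`R_{abcd} = C_{abcd} + (g ∧ P)_{abcd}` for the Schouten tensor `P`. -/
def kulkarniNomizu (T : Fin n → Fin n → ℝ) (a b c d : Fin n) : ℝ :=
  G.g x c a * T b d - G.g x c b * T a d + G.g x d b * T a c - G.g x d a * T b c

lemma weyl_eq_riem4_sub_kulkarniNomizu (a b c d : Fin n) : G.Weyl a b c d x =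
    G.Riem4 a b c d x - G.kulkarniNomizu x (fun i j => G.Schouten i j x) a b c d := rfl

lemma weyl_swap_swap (a b c d : Fin n) : G.Weyl b a d c x = G.Weyl a b c d x := by
  rw [Weyl, Weyl, riem4_swap_left, riem4_swap_right]
  ring

lemma trace_kulkarniNomizu (T : Fin n → Fin n → ℝ) (b d : Fin n) :
    G.trace x (fun c e => G.kulkarniNomizu x T c b e d) =
      (n - 2) * T b d + G.trace x T * G.g x b d := by
  have hgg : G.trace x (fun c e => T b d * G.g x e c) = n * T b d := by
    rw [trace_const_mul, trace_swap, trace_g, mul_comm]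
  have hgb : G.trace x (fun c e => T c d * G.g x b e) = T b d := by
    rw [G.trace_mul x (fun c => T c d), cometric_g_right]
  have hgd : G.trace x (fun c e => G.g x d c * T b e) = T b d := by
    rw [trace_mul, cometric_g_left]
  simp only [kulkarniNomizu, trace_sub, trace_add, hgd, mul_comm _ (T _ d), hgg,
    G.symm x _ b, hgb]
  rw [trace_const_mul]
  ring

lemma cometric_kulkarniNomizu (T : Fin n → Fin n → ℝ) (u : Fin n → ℝ)
    (b c a : Fin n) : G.cometric x (fun e => G.kulkarniNomizu x T b c e a) u =
      u b * T c a - u c * T b a + G.g x a c * G.cometric x (T b) u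
        - G.g x a b * G.cometric x (T c) u := by
  have hKN : (fun e => G.kulkarniNomizu x T b c e a) =
      T c a • G.g x b - T b a • G.g x c + G.g x a c • T b - G.g x a b • T c := by
    ext e
    simp only [kulkarniNomizu, G.symm x e, Pi.sub_apply, Pi.add_apply, Pi.smul_apply, smul_eq_mul]
    ring
  simp only [hKN, map_smul, map_add, map_sub, LinearMap.smul_apply, LinearMap.add_apply,
    LinearMap.sub_apply, cometric_g_left, smul_eq_mul]
  ring

lemma sum_kulkarniNomizu_mul (T : Fin n → Fin n → ℝ) (a b : Fin n) (Y X : Pt n) :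
    ∑ c, ∑ d, G.kulkarniNomizu x T a b c d * Y c * X d =
      G.flat x Y a * (T b ⬝ᵥ X) - G.flat x Y b * (T a ⬝ᵥ X)
        + (T a ⬝ᵥ Y) * G.flat x X b - (T b ⬝ᵥ Y) * G.flat x X a := by
  simp only [flat, Matrix.mulVec, dotProduct, Matrix.of_apply, Finset.sum_mul_sum,
    ← Finset.sum_add_distrib, ← Finset.sum_sub_distrib]
  refine Finset.sum_congr rfl fun c _ => Finset.sum_congr rfl fun d _ => ?_
  rw [kulkarniNomizu, G.symm x c, G.symm x c, G.symm x d, G.symm x d]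
  ring

lemma cotton_eq_curl (a b c : Fin n) :
    G.Cotton a b c x = G.curl (fun y i j => G.Schouten i j y) a b c x := rfl

end CurvatureTraces

section ConformalChange

variable {Υ : Pt n → ℝ}

/-- `Ghat` is the conformal rescaling `e^{2Υ}g` of `G` by a smooth function `Υ`. -/
structure IsConformalChange (G Ghat : MetricG n) (Υ : Pt n → ℝ) : Prop where
  contDiff : ContDiff ℝ ∞ Υ
  g_eq : ∀ x a, Ghat.g x a = Real.exp (2 * Υ x) • G.g x a

/-- The tensor `−∇_aΥ_b + Υ_aΥ_b − ½ Υ^cΥ_c g_{ab}`, by which the Schouten tensors of `g` and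
`e^{2Υ}g` differ. -/
def schoutenShift (Υ : Pt n → ℝ) (x : Pt n) (a : Fin n) : Fin n → ℝ :=
  differential Υ x a • differential Υ x - (fun b => G.cov1 (differential Υ) a b x)
    - ((1 / 2) * G.cometric x (differential Υ x) (differential Υ x)) • G.g x a

lemma schoutenShift_apply (Υ : Pt n → ℝ) (x : Pt n) (a b : Fin n) : G.schoutenShift Υ x a b =
    differential Υ x a * differential Υ x b - G.cov1 (differential Υ) a b x
      - (1 / 2) * G.cometric x (differential Υ x) (differential Υ x) * G.g x a b := rfl

lemma schoutenShift_comm (hΥ : ContDiff ℝ ∞ Υ) (x : Pt n) (a b : Fin n) :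
    G.schoutenShift Υ x b a = G.schoutenShift Υ x a b := by
  rw [schoutenShift_apply, schoutenShift_apply, G.cov1_differential_comm hΥ a b, G.symm x a b,
    mul_comm (differential Υ x a)]

@[fun_prop]
lemma contDiff_schoutenShift (hΥ : ContDiff ℝ ∞ Υ) (a : Fin n) :
    ContDiff ℝ ∞ (fun x => G.schoutenShift Υ x a) := by
  unfold schoutenShift
  fun_prop

lemma cov1_schoutenShift (hΥ : ContDiff ℝ ∞ Υ) (x : Pt n) (i j a : Fin n) :
    G.cov1 (fun y => G.schoutenShift Υ y j) i a x =
      pd i (fun y => differential Υ y j) x * differential Υ x a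
        + differential Υ x j * G.cov1 (differential Υ) i a x
        - G.cov1 (fun y k => G.cov1 (differential Υ) j k y) i a x
        - (G.cometric x (fun k => G.cov1 (differential Υ) i k x) (differential Υ x) * G.g x j a
          + (1 / 2) * G.cometric x (differential Υ x) (differential Υ x)
            * G.christoffelFirst x i j a) := by
  have hq : ContDiff ℝ ∞
      (fun y => (1 / 2) * G.cometric y (differential Υ y) (differential Υ y)) := by fun_prop
  have hsq : pd i (fun y => (1 / 2) * G.cometric y (differential Υ y) (differential Υ y)) x =
      G.cometric x (fun k => G.cov1 (differential Υ) i k x) (differential Υ x) := by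
    rw [pd_const_mul i _ (differentiableAt_of_contDiff_infty (by fun_prop)),
      G.pd_cometric (by fun_prop) (by fun_prop), G.cometric_comm x (differential Υ x)]
    ring
  unfold schoutenShift
  rw [cov1_sub _ (by fun_prop) (by fun_prop), cov1_sub _ (by fun_prop) (by fun_prop),
    cov1_smul _ (by fun_prop) (by fun_prop),
    cov1_smul _ (differentiableAt_of_contDiff_infty hq) (by fun_prop), cov1_g, hsq]

/-- The terms in `∇_aΥ_b` assemble into the Kulkarni–Nomizu term, which the change of connection in
`IsConformalChange.curl_eq_of_symm` cancels. -/
lemma curl_schoutenShift (hΥ : ContDiff ℝ ∞ Υ) (x : Pt n) (a b c : Fin n) :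
    G.curl (G.schoutenShift Υ) a b c x =
      G.cometric x (fun e => G.Riem4 b c e a x) (differential Υ x)
        + G.cometric x (fun e => G.kulkarniNomizu x (G.schoutenShift Υ x) b c e a)
            (differential Υ x) := by
  have hRicci := (G.curl_eq_cov1 _ a b c).symm.trans
    (G.curl_cov1 (x := x) (contDiff_differential hΥ) a b c)
  have hcomm : pd b (fun y => differential Υ y c) x = pd c (fun y => differential Υ y b) x :=
    pd_comm b c (mod_cast contDiff_infty.1 hΥ 2)
  have hpair (i : Fin n) : G.cometric x (G.schoutenShift Υ x i) (differential Υ x) =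
      (1 / 2) * G.cometric x (differential Υ x) (differential Υ x) * differential Υ x i
        - G.cometric x (fun k => G.cov1 (differential Υ) i k x) (differential Υ x) := by
    simp only [schoutenShift, map_sub, map_smul, LinearMap.sub_apply, LinearMap.smul_apply,
      smul_eq_mul, cometric_g_left]
    ring
  rw [cometric_kulkarniNomizu, curl_eq_cov1, G.cov1_schoutenShift hΥ, G.cov1_schoutenShift hΥ,
    hpair, hpair, G.christoffelFirst_comm x b c, G.symm x a b, G.symm x a c]
  simp only [schoutenShift_apply]
  linear_combination differential Υ x a * hcomm - hRicci

/-- `e^{-2Υ}` times the Christoffel symbols of the first kind of `e^{2Υ}g`. -/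
def conformalChristoffel (Υ : Pt n → ℝ) (x : Pt n) (a b : Fin n) : Fin n → ℝ :=
  G.christoffelFirst x a b + differential Υ x a • G.g x b + differential Υ x b • G.g x a
    - G.g x a b • differential Υ x

lemma conformalChristoffel_apply (Υ : Pt n → ℝ) (x : Pt n) (a b c : Fin n) :
    G.conformalChristoffel Υ x a b c = G.christoffelFirst x a b c + differential Υ x a * G.g x b c
      + differential Υ x b * G.g x a c - G.g x a b * differential Υ x c := rfl

@[fun_prop]
lemma contDiff_conformalChristoffel (hΥ : ContDiff ℝ ∞ Υ) (a b : Fin n) :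
    ContDiff ℝ ∞ (fun x => G.conformalChristoffel Υ x a b) := by
  unfold conformalChristoffel
  fun_prop

lemma cometric_conformalChristoffel (Υ : Pt n → ℝ) (x : Pt n) (u : Fin n → ℝ) (a b : Fin n) :
    G.cometric x u (G.conformalChristoffel Υ x a b) = G.cometric x (G.christoffelFirst x a b) u
      + differential Υ x a * u b + differential Υ x b * u a
      - G.g x a b * G.cometric x (differential Υ x) u := by
  simp only [G.cometric_comm x u, conformalChristoffel, map_add, map_sub, map_smul,
    LinearMap.add_apply, LinearMap.sub_apply, LinearMap.smul_apply, cometric_g_left, smul_eq_mul]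

lemma cov1_conformalChristoffel (hΥ : ContDiff ℝ ∞ Υ) (x : Pt n) (a b c d : Fin n) :
    G.cov1 (fun y => G.conformalChristoffel Υ y b d) a c x =
      G.cov1 (fun y => G.christoffelFirst y b d) a c x
        + pd a (fun y => differential Υ y b) x * G.g x d c
        + differential Υ x b * G.christoffelFirst x a d c
        + pd a (fun y => differential Υ y d) x * G.g x b c
        + differential Υ x d * G.christoffelFirst x a b c
        - (G.christoffelFirst x a b d + G.christoffelFirst x a d b) * differential Υ x c
        - G.g x b d * G.cov1 (differential Υ) a c x := by
  unfold conformalChristoffel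
  rw [cov1_sub _ (by fun_prop) (by fun_prop), cov1_add _ (by fun_prop) (by fun_prop),
    cov1_add _ (by fun_prop) (by fun_prop), cov1_smul _ (by fun_prop) (by fun_prop),
    cov1_smul _ (by fun_prop) (by fun_prop), cov1_smul _ (by fun_prop) (by fun_prop),
    cov1_g, cov1_g, pd_g]
  ring

namespace IsConformalChange

variable {G} {Ghat : MetricG n}

lemma ip_eq (h : IsConformalChange G Ghat Υ) (x X Y : Pt n) :
    Ghat.ip x X Y = Real.exp (2 * Υ x) * G.ip x X Y := by
  simp only [ip, h.g_eq, Pi.smul_apply, smul_eq_mul, Finset.mul_sum, mul_assoc]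

lemma ginv_eq (h : IsConformalChange G Ghat Υ) (x : Pt n) (a b : Fin n) :
    Ghat.ginv x a b = (Real.exp (2 * Υ x))⁻¹ * G.ginv x a b := by
  have hinv : Matrix.of (Ghat.ginv x) = (Real.exp (2 * Υ x))⁻¹ • Matrix.of (G.ginv x) := by
    have hg : Matrix.of (Ghat.g x) = Real.exp (2 * Υ x) • Matrix.of (G.g x) :=
      Matrix.ext fun i j => congrFun (h.g_eq x i) j
    rw [ginv_eq_inv, hg]
    refine Matrix.inv_eq_left_inv ?_
    rw [Matrix.smul_mul, Matrix.mul_smul, ginv_mul_g,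
      inv_smul_smul₀ (Real.exp_pos _).ne']
  exact congrFun₂ hinv a b

lemma trace_eq (h : IsConformalChange G Ghat Υ) (x : Pt n) (T : Fin n → Fin n → ℝ) :
    Ghat.trace x T = (Real.exp (2 * Υ x))⁻¹ * G.trace x T := by
  simp only [trace, h.ginv_eq, Finset.mul_sum, mul_assoc]

lemma cometric_eq (h : IsConformalChange G Ghat Υ) (x : Pt n) (u v : Fin n → ℝ) :
    Ghat.cometric x u v = (Real.exp (2 * Υ x))⁻¹ * G.cometric x u v := by
  rw [← trace_mul, h.trace_eq, trace_mul]

lemma christoffelFirst_eq (h : IsConformalChange G Ghat Υ) (x : Pt n) (a b : Fin n) :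
    Ghat.christoffelFirst x a b = Real.exp (2 * Υ x) • G.conformalChristoffel Υ x a b := by
  have hΥ := h.contDiff
  have hpd (i j k : Fin n) : pd i (fun y => Ghat.g y j k) x =
      Real.exp (2 * Υ x) * (2 * pd i Υ x * G.g x j k + pd i (fun y => G.g y j k) x) := by
    simp only [h.g_eq, Pi.smul_apply, smul_eq_mul]
    rw [pd_mul i (by fun_prop) (by fun_prop), pd_exp i (by fun_prop),
      pd_const_mul i 2 (by fun_prop)]
    ring
  ext c
  simp only [conformalChristoffel_apply, christoffelFirst, hpd, differential, Pi.smul_apply,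
    smul_eq_mul, G.symm x c]
  ring

lemma cov1_eq (h : IsConformalChange G Ghat Υ) (x : Pt n) (α : Pt n → Fin n → ℝ)
    (a b : Fin n) :
    Ghat.cov1 α a b x = G.cov1 α a b x - (differential Υ x a * α x b + differential Υ x b * α x a
      - G.g x a b * G.cometric x (differential Υ x) (α x)) := by
  rw [cov1_eq_pd_sub_cometric, cov1_eq_pd_sub_cometric, h.cometric_eq, h.christoffelFirst_eq,
    map_smul, LinearMap.smul_apply, smul_eq_mul, inv_mul_cancel_left₀ (Real.exp_pos _).ne',
    cometric_comm, cometric_conformalChristoffel]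
  ring

lemma curl_eq_of_symm (h : IsConformalChange G Ghat Υ) (x : Pt n)
    {T : Pt n → Fin n → Fin n → ℝ} (hT : ∀ i j, T x j i = T x i j) (a b c : Fin n) :
    Ghat.curl T a b c x = G.curl T a b c x
      - G.cometric x (fun e => G.kulkarniNomizu x (T x) b c e a) (differential Υ x) := by
  simp only [curl_eq_cov1, h.cov1_eq, cometric_kulkarniNomizu,
    G.cometric_comm x (differential Υ x), hT b c, G.symm x _ a]
  ring

lemma riem4_eq (h : IsConformalChange G Ghat Υ) (x : Pt n) (a b c d : Fin n) :
    Ghat.Riem4 a b c d x = Real.exp (2 * Υ x) *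
      (G.Riem4 a b c d x + G.kulkarniNomizu x (G.schoutenShift Υ x) a b c d) := by
  have hΥ := h.contDiff
  have hexp (i : Fin n) : pd i (fun y => Real.exp (2 * Υ y)) x =
      Real.exp (2 * Υ x) * (2 * differential Υ x i) := by
    rw [pd_exp i (by fun_prop), pd_const_mul i 2 (by fun_prop), differential]
  have hcov (i j : Fin n) : Ghat.cov1 (fun y => Ghat.christoffelFirst y j d) i c x =
      Real.exp (2 * Υ x) * (G.cov1 (fun y => G.conformalChristoffel Υ y j d) i c x
        + differential Υ x i * G.conformalChristoffel Υ x j d c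
        - differential Υ x c * G.conformalChristoffel Υ x j d i
        + G.g x i c * G.cometric x (differential Υ x) (G.conformalChristoffel Υ x j d)) := by
    simp only [h.christoffelFirst_eq]
    rw [h.cov1_eq, cov1_smul _ (by fun_prop) (by fun_prop), hexp]
    simp only [map_smul, Pi.smul_apply, smul_eq_mul]
    ring
  have hcomm : pd a (fun y => differential Υ y b) x = pd b (fun y => differential Υ y a) x :=
    pd_comm a b (mod_cast contDiff_infty.1 hΥ 2)
  rw [riem4_eq_cov1_christoffelFirst, hcov, hcov, ← mul_sub, cov1_conformalChristoffel _ hΥ,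
    cov1_conformalChristoffel _ hΥ, cometric_conformalChristoffel, cometric_conformalChristoffel,
    riem4_eq_cov1_christoffelFirst]
  simp only [kulkarniNomizu, schoutenShift_apply, conformalChristoffel_apply,
    G.cov1_eq_pd_sub_cometric (differential Υ), G.christoffelFirst_comm x b a, hcomm, G.symm x b a,
    G.symm x c a, G.symm x c b, G.symm x d a, G.symm x d b]
  ring

lemma ricci_eq (h : IsConformalChange G Ghat Υ) (x : Pt n) (b d : Fin n) :
    Ghat.Ricci b d x = G.Ricci b d x + (n - 2) * G.schoutenShift Υ x b d
      + G.trace x (G.schoutenShift Υ x) * G.g x b d := by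
  simp only [ricci_eq_trace_riem4, h.trace_eq, h.riem4_eq, trace_const_mul, trace_add,
    trace_kulkarniNomizu, inv_mul_cancel_left₀ (Real.exp_pos _).ne', add_assoc]

lemma scal_eq (h : IsConformalChange G Ghat Υ) (x : Pt n) :
    Ghat.Scal x = (Real.exp (2 * Υ x))⁻¹ *
      (G.Scal x + 2 * (n - 1) * G.trace x (G.schoutenShift Υ x)) := by
  simp only [scal_eq_trace_ricci, h.trace_eq, h.ricci_eq, trace_add]
  rw [trace_const_mul, trace_const_mul, trace_g]
  ring

lemma schouten_eq (h : IsConformalChange G Ghat Υ) (hn : 3 ≤ n) (x : Pt n) (a b : Fin n) :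
    Ghat.Schouten a b x = G.Schouten a b x + G.schoutenShift Υ x a b := by
  have hn' : (3 : ℝ) ≤ n := mod_cast hn
  have hn2 : (n : ℝ) - 2 ≠ 0 := by linarith
  have hn1 : (n : ℝ) - 1 ≠ 0 := by linarith
  have hexp : Real.exp (2 * Υ x) ≠ 0 := (Real.exp_pos _).ne'
  simp only [Schouten, h.ricci_eq, h.scal_eq, h.g_eq, Pi.smul_apply, smul_eq_mul]
  field_simp
  ring

lemma weyl_eq (h : IsConformalChange G Ghat Υ) (hn : 3 ≤ n) (x : Pt n) (a b c d : Fin n) :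
    Ghat.Weyl a b c d x = Real.exp (2 * Υ x) * G.Weyl a b c d x := by
  simp only [Weyl, h.riem4_eq, h.schouten_eq hn, h.g_eq, kulkarniNomizu, Pi.smul_apply,
    smul_eq_mul]
  ring

lemma cotton_eq (h : IsConformalChange G Ghat Υ) (hn : 3 ≤ n) (x : Pt n) (a b c : Fin n) :
    Ghat.Cotton a b c x = G.Cotton a b c x
      + ∑ d, (∑ e, G.ginv x d e * G.Weyl c b a e x) * pd d Υ x := by
  have hΥ := h.contDiff
  have hadd : Ghat.Cotton a b c x = Ghat.curl (fun y i j => G.Schouten i j y) a b c x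
      + Ghat.curl (G.schoutenShift Υ) a b c x := by
    have hschouten (i : Fin n) : (fun y j => Ghat.Schouten i j y) =
        fun y => (fun j => G.Schouten i j y) + G.schoutenShift Υ y i :=
      funext₂ fun y j => h.schouten_eq hn y i j
    rw [cotton_eq_curl, curl_eq_cov1, curl_eq_cov1, curl_eq_cov1, hschouten, hschouten,
      cov1_add _ (by fun_prop) (by fun_prop), cov1_add _ (by fun_prop) (by fun_prop)]
    ring
  have hweyl : ∑ d, (∑ e, G.ginv x d e * G.Weyl c b a e x) * pd d Υ x =
      G.cometric x (fun e => G.Riem4 b c e a x) (differential Υ x) - G.cometric x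
        (fun e => G.kulkarniNomizu x (fun i j => G.Schouten i j x) b c e a)
        (differential Υ x) := by
    rw [← LinearMap.sub_apply, ← map_sub, cometric_comm, cometric_eq_dotProduct_sharp,
      dotProduct_comm]
    simp only [G.weyl_swap_swap x b c]
    rfl
  rw [hadd, h.curl_eq_of_symm x (G.schouten_comm x), h.curl_eq_of_symm x
    (G.schoutenShift_comm h.contDiff x), G.curl_schoutenShift h.contDiff, hweyl, cotton_eq_curl]
  ring

end IsConformalChange
end ConformalChange

section ParallelRays

variable {G} {K : Pt n → Pt n} {f : Pt n → Fin n → ℝ} {x X : Pt n}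

lemma ParallelRays.cov1_flat (hray : G.ParallelRays K f) (hK : ContDiff ℝ ∞ K) (a b : Fin n) :
    G.cov1 (fun y => G.flat y (K y)) a b x = f x a * G.flat x (K x) b := by
  have hcov : (fun c => G.covVec K a c x) = f x a • K x := funext fun c => hray x a c
  rw [MetricG.cov1_flat _ (differentiableAt_of_contDiff_infty hK), hcov, flat_smul, Pi.smul_apply,
    smul_eq_mul]

lemma ParallelRays.sum_riem4_mul (hray : G.ParallelRays K f) (hK : ContDiff ℝ ∞ K)
    (hf : ContDiff ℝ ∞ f) (a b c : Fin n) : ∑ d, G.Riem4 a b c d x * K x d =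
      (pd a (fun y => f y b) x - pd b (fun y => f y a) x) * G.flat x (K x) c := by
  have hκ := differentiableAt_of_contDiff_infty (x := x) (G.contDiff_flat hK)
  have hcov : (fun y i => G.flat y (fun j => G.covVec K i j y)) =
      fun y i => f y i • G.flat y (K y) := by
    ext y i j
    rw [← G.cov1_flat (differentiableAt_of_contDiff_infty hK), hray.cov1_flat hK]
    rfl
  rw [← G.curl_covVec hK, hcov, curl_eq_cov1, cov1_smul _ (by fun_prop) hκ,
    cov1_smul _ (by fun_prop) hκ, hray.cov1_flat hK, hray.cov1_flat hK]
  ring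

lemma ParallelRays.cov1_dotProduct_eq_zero (hray : G.ParallelRays K f) (hK : ContDiff ℝ ∞ K)
    {α : Pt n → Fin n → ℝ} (hα : ContDiff ℝ ∞ α)
    (hαK : ∀ y Y, G.ip y (K y) Y = 0 → α y ⬝ᵥ Y = 0) (hKx : K x ≠ 0)
    (hX : G.ip x (K x) X = 0) (a : Fin n) : (fun b => G.cov1 α a b x) ⬝ᵥ X = 0 := by
  have hκ := G.contDiff_flat hK
  have hκx := differentiableAt_of_contDiff_infty (x := x) hκ
  have hαX : α x ⬝ᵥ X = 0 := hαK x X hX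
  obtain ⟨i, hi⟩ := Function.ne_iff.1 (G.flat_ne_zero x hKx)
  have hprop : (fun y => G.flat y (K y) i • α y) = fun y => α y i • G.flat y (K y) := by
    ext y j
    simpa only [Pi.smul_apply, smul_eq_mul, mul_comm (α y i)] using
      mul_eq_mul_of_dotProduct_eq_zero (w := G.flat y (K y)) (u := α y)
        (fun Y hY => hαK y Y ((G.ip_eq_flat_dotProduct y _ _).trans hY)) i j
  have hderiv : G.flat x (K x) i • (fun b => G.cov1 α a b x) =
      (pd a (fun y => α y i) x + α x i * f x a) • G.flat x (K x)
        - pd a (fun y => G.flat y (K y) i) x • α x := by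
    ext b
    have hb := congrArg (fun β => G.cov1 β a b x) hprop
    beta_reduce at hb
    rw [cov1_smul _ (by fun_prop) (by fun_prop), cov1_smul _ (by fun_prop) hκx,
      hray.cov1_flat hK] at hb
    simp only [Pi.smul_apply, Pi.sub_apply, smul_eq_mul]
    linear_combination hb
  rw [ip_eq_flat_dotProduct] at hX
  have hdot := congrArg (· ⬝ᵥ X) hderiv
  simpa [hX, hαX, show G.flat x (K x) i ≠ 0 from hi] using hdot

end ParallelRays

section PureRadiation

variable {G} {K : Pt n → Pt n} {f : Pt n → Fin n → ℝ} {x X : Pt n}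

lemma PureRadiation.scal_eq_zero (hpr : G.PureRadiation K) (hKx : K x ≠ 0)
    (hnull : G.ip x (K x) (K x) = 0) : G.Scal x = 0 := by
  obtain ⟨i, hi⟩ := Function.ne_iff.1 (G.flat_ne_zero x hKx)
  have hprop (a b : Fin n) : G.flat x (K x) i * G.Ricci a b x =
      G.flat x (K x) a * G.Ricci i b x :=
    mul_eq_mul_of_dotProduct_eq_zero (w := G.flat x (K x)) (u := fun a => G.Ricci a b x)
      (fun Y hY => hpr x Y ((G.ip_eq_flat_dotProduct x _ _).trans hY) b) i a
  have hscal : G.flat x (K x) i * G.Scal x = 0 := calc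
    G.flat x (K x) i * G.Scal x = K x ⬝ᵥ fun b => G.Ricci i b x := by
      rw [scal_eq_trace_ricci, ← trace_const_mul]
      simp only [hprop]
      rw [G.trace_mul x _ (fun b => G.Ricci i b x), cometric_flat_left]
    _ = ∑ b, G.Ricci b i x * K x b := by
      simp only [dotProduct, G.ricci_comm x _ i, mul_comm]
    _ = 0 := hpr x _ hnull i
  exact (mul_eq_zero.1 hscal).resolve_left hi

lemma PureRadiation.schouten_dotProduct_eq_zero (hpr : G.PureRadiation K) (hKx : K x ≠ 0)
    (hnull : G.ip x (K x) (K x) = 0) (hX : G.ip x (K x) X = 0) (b : Fin n) :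
    (fun a => G.Schouten b a x) ⬝ᵥ X = 0 := by
  have hricci := hpr x X hX b
  simp only [G.ricci_comm x b] at hricci
  simp only [dotProduct, Schouten, hpr.scal_eq_zero hKx hnull, zero_div,
    zero_mul, sub_zero, mul_assoc, ← Finset.mul_sum, hricci, mul_zero]

lemma PureRadiation.sum_weyl_mul_eq_zero (hpr : G.PureRadiation K) (hray : G.ParallelRays K f)
    (hK : ContDiff ℝ ∞ K) (hf : ContDiff ℝ ∞ f) (hKx : K x ≠ 0)
    (hnull : G.ip x (K x) (K x) = 0) (hX : G.ip x (K x) X = 0) (a b : Fin n) :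
    ∑ c, ∑ d, G.Weyl a b c d x * K x c * X d = 0 := by
  have hkn : ∑ c, ∑ d, G.kulkarniNomizu x (fun i j => G.Schouten i j x) a b c d * K x c * X d =
      0 := by
    simp only [sum_kulkarniNomizu_mul, hpr.schouten_dotProduct_eq_zero hKx hnull hX,
      hpr.schouten_dotProduct_eq_zero hKx hnull hnull, mul_zero, zero_mul, sub_zero, add_zero]
  have hriem : ∑ c, ∑ d, G.Riem4 a b c d x * K x c * X d = 0 := by
    have hrow (d : Fin n) : ∑ c, G.Riem4 a b c d x * K x c * X d =
        -(pd a (fun y => f y b) x - pd b (fun y => f y a) x) * (G.flat x (K x) d * X d) := by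
      rw [← Finset.sum_mul, ← mul_assoc, neg_mul, ← hray.sum_riem4_mul hK hf,
        ← Finset.sum_neg_distrib]
      simp only [← neg_mul, ← G.riem4_swap_right a b d]
    rw [ip_eq_flat_dotProduct, dotProduct] at hX
    rw [Finset.sum_comm, Finset.sum_congr rfl fun d _ => hrow d, ← Finset.mul_sum, hX, mul_zero]
  simp only [weyl_eq_riem4_sub_kulkarniNomizu, sub_mul, Finset.sum_sub_distrib, hriem, hkn,
    sub_zero]

lemma PureRadiation.sum_cotton_mul_eq_zero (hpr : G.PureRadiation K) (hray : G.ParallelRays K f)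
    (hK : ContDiff ℝ ∞ K) (hK0 : ∀ y, K y ≠ 0) (hnull : G.IsNull K)
    (hX : G.ip x (K x) X = 0) (b c : Fin n) : ∑ a, G.Cotton a b c x * X a = 0 := by
  have hcov (i j : Fin n) :
      (fun a => G.cov1 (fun y k => G.Schouten i k y) j a x) ⬝ᵥ X = 0 :=
    hray.cov1_dotProduct_eq_zero hK (contDiff_pi.2 fun k => G.contDiff_schouten i k)
      (fun y Y hY => hpr.schouten_dotProduct_eq_zero (hK0 y) (hnull y) hY i) (hK0 x) hX j
  simp only [dotProduct] at hcov
  simp only [cotton_eq_curl, curl_eq_cov1, sub_mul, Finset.sum_sub_distrib, hcov, sub_zero]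

end PureRadiation

end MetricG

theorem stmt_10_general {n : ℕ} (hn : 3 ≤ n) (G Ghat : MetricG n) (Υ : Pt n → ℝ)
    (hΥ : ContDiff ℝ (⊤ : ℕ∞) Υ)
    (hconf : ∀ x a b, Ghat.g x a b = Real.exp (2 * Υ x) * G.g x a b)
    (K : Pt n → Pt n) (f : Pt n → Fin n → ℝ) (hKs : SmoothVF K) (hfs : SmoothForm f)
    (hK0 : ∀ x, K x ≠ 0) (hnull : G.IsNull K)
    (hpr : Ghat.PureRadiation K) (hray : Ghat.ParallelRays K f) :
    (∀ x (X : Pt n), G.ip x (K x) X = 0 → ∀ a b,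
        (∑ c, ∑ d, G.Weyl a b c d x * K x c * X d) = 0) ∧
      ∀ x (X : Pt n), G.ip x (K x) X = 0 → ∀ b c,
        (∑ a, (G.Cotton a b c x
          + ∑ d, (∑ e, G.ginv x d e * G.Weyl c b a e x) * pd d Υ x) * X a) = 0 := by
  have h : G.IsConformalChange Ghat Υ := ⟨hΥ, fun x a => funext (hconf x a)⟩
  have hK : ContDiff ℝ ∞ K := contDiff_pi.2 hKs
  have hperp {x X : Pt n} (hX : G.ip x (K x) X = 0) : Ghat.ip x (K x) X = 0 := by
    rw [h.ip_eq, hX, mul_zero]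
  refine ⟨fun x X hX a b => ?_, fun x X hX b c => ?_⟩
  · have hweyl := hpr.sum_weyl_mul_eq_zero hray hK (contDiff_pi.2 hfs) (hK0 x) (hperp (hnull x))
      (hperp hX) a b
    simp only [h.weyl_eq hn, mul_assoc, ← Finset.mul_sum] at hweyl ⊢
    exact (mul_eq_zero.1 hweyl).resolve_left (Real.exp_pos _).ne'
  · simp only [← h.cotton_eq hn]
    exact hpr.sum_cotton_mul_eq_zero hray hK hK0 (fun y => hperp (hnull y)) (hperp hX) b c

/-- If the metric g is conformal to a pure radiation metric with parallel
rays spanned by K (ĝ = e^{2Υ}g aligned pure radiation), then the Weyl tensor of g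
satisfies C_{abcd}K^cX^d = 0 for all X ⊥ K, and the gradient Υ_a = ∇_aΥ satisfies
(A_{abc} + C_{cba}{}^dΥ_d)X^a = 0 for all X ⊥ K. -/
theorem stmt_10 {n : ℕ} (hn : 4 ≤ n) (G Ghat : MetricG n) (Υ : Pt n → ℝ)
    (hΥ : ContDiff ℝ (⊤ : ℕ∞) Υ)
    (hconf : ∀ x a b, Ghat.g x a b = Real.exp (2 * Υ x) * G.g x a b)
    (K : Pt n → Pt n) (f : Pt n → Fin n → ℝ) (hKs : SmoothVF K) (hfs : SmoothForm f)
    (hK0 : ∀ x, K x ≠ 0) (hnull : G.IsNull K)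
    (hpr : Ghat.PureRadiation K) (hray : Ghat.ParallelRays K f) :
    (∀ x (X : Pt n), G.ip x (K x) X = 0 → ∀ a b,
        (∑ c, ∑ d, G.Weyl a b c d x * K x c * X d) = 0) ∧
      ∀ x (X : Pt n), G.ip x (K x) X = 0 → ∀ b c,
        (∑ a, (G.Cotton a b c x
          + ∑ d, (∑ e, G.ginv x d e * G.Weyl c b a e x) * pd d Υ x) * X a) = 0 := by
  exact stmt_10_general (by omega) G Ghat Υ hΥ hconf K f hKs hfs hK0 hnull hpr hray
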